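/- Let 𝐮 be the standard sequence over {a, b} whose slope has continued fraction expansion θ = [0, 1, 3, 2, 2, 2, …] (partial quotients a₁ = 1, a₂ = 3, and aₙ = 2 for all n ≥ 3), and let 𝐱_{12} = colour(𝐮, (123456)^ω, (1′2′3′4′5′6′)^ω). If w is a bispecial factor of 𝐱_{12} such that π(w) contains both a and b, then |w|/|v| < 1/10 for every return word v to w in 𝐱_{12}. -/

import Mathlib

open Filter
open scoped ENNReal

namespace BalancedCE

variable {α : Type*} {β : Type*}

/-- The factor of `v` of length `n` starting at position `i`. -/
def factorAt (v : ℕ → α) (i n : ℕ) : List α := (List.range n).map fun k => v (i + k)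

/-- `u` is a factor of the sequence `v`. -/
def IsFactor (v : ℕ → α) (u : List α) : Prop := ∃ i, factorAt v i u.length = u

/-- The word `w` occurs in the sequence `v` at position `i`. -/
def OccursAt (v : ℕ → α) (w : List α) (i : ℕ) : Prop := factorAt v i w.length = w

/-- A sequence is balanced if counts of each letter in equal-length factors differ by at most 1. -/
def Balanced [DecidableEq α] (v : ℕ → α) : Prop :=
  ∀ (a : α) (u w : List α), IsFactor v u → IsFactor v w → u.length = w.length →
    |(u.count a : ℤ) - (w.count a : ℤ)| ≤ 1

def EventuallyPeriodic (v : ℕ → α) : Prop :=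
  ∃ p, 0 < p ∧ ∃ N, ∀ n, N ≤ n → v (n + p) = v n

def Recurrent (v : ℕ → α) : Prop :=
  ∀ u : List α, IsFactor v u → ∀ N : ℕ, ∃ i, N ≤ i ∧ OccursAt v u i

/-- `i < j` are consecutive occurrences of the letter `a` in `v`. -/
def ConsecOcc (v : ℕ → α) (a : α) (i j : ℕ) : Prop :=
  i < j ∧ v i = a ∧ v j = a ∧ ∀ k, i < k → k < j → v k ≠ a

/-- `p` is a period of the finite word `z` (i.e. `z` is a prefix of `u^ω` with `|u| = p`). -/
def IsPeriod (z : List α) (p : ℕ) : Prop :=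
  0 < p ∧ ∀ i, i + p < z.length → z[i]? = z[i + p]?

/-- The minimal period of a finite word. -/
noncomputable def minPeriod (z : List α) : ℕ := sInf {p | IsPeriod z p}

/-- The exponent of a finite word: its length divided by its minimal period. -/
noncomputable def expE (z : List α) : ℝ≥0∞ := (z.length : ℝ≥0∞) / (minPeriod z : ℝ≥0∞)

/-- The critical exponent of a sequence: the supremum of exponents of nonempty factors. -/
noncomputable def criticalExponent (v : ℕ → α) : ℝ≥0∞ :=
  ⨆ (z : List α) (_ : IsFactor v z ∧ z ≠ []), expE z

/-- A Pansiot sequence over a `d`-letter alphabet. -/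
def Pansiot (d : ℕ) (v : ℕ → α) : Prop :=
  (∀ i : ℕ, (factorAt v i (d - 1)).Nodup) ∧
  ∀ (a : α) (i j : ℕ), ConsecOcc v a i j → v (i + 1) ≠ v (j + 1)

/-- The letter `a` has frequency `ρ` in the sequence `v`. -/
def HasFreq [DecidableEq α] (v : ℕ → α) (a : α) (ρ : ℝ) : Prop :=
  Tendsto (fun n => ((factorAt v 0 n).count a : ℝ) / n) atTop (nhds ρ)

/-- Factor complexity of a sequence. -/
noncomputable def complexity (v : ℕ → α) (n : ℕ) : ℕ :=
  Set.ncard {u : List α | IsFactor v u ∧ u.length = n}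

/-- Sturmian sequences: aperiodic binary sequences of factor complexity `n + 1`.
Convention: the letter `a` is `false`, the letter `b` is `true`. -/
def Sturmian (u : ℕ → Bool) : Prop :=
  ¬ EventuallyPeriodic u ∧ ∀ n, complexity u n = n + 1

/-- Prepending a letter to a sequence. -/
def consSeq (c : α) (v : ℕ → α) : ℕ → α := fun n =>
  match n with
  | 0 => c
  | Nat.succ m => v m

/-- A standard sequence: a Sturmian sequence `u` such that `a·u` and `b·u` are Sturmian. -/
def IsStandard (u : ℕ → Bool) : Prop :=
  Sturmian u ∧ Sturmian (consSeq false u) ∧ Sturmian (consSeq true u)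

/-- The slope of a binary sequence, with the convention `ρ_b > ρ_a` (`a = false`, `b = true`). -/
def HasSlope (u : ℕ → Bool) (θ : ℝ) : Prop :=
  ∃ ρa ρb : ℝ, HasFreq u false ρa ∧ HasFreq u true ρb ∧ ρa < ρb ∧ θ = ρa / ρb

/-- `θ` has the (infinite) continued fraction expansion `[0; a 1, a 2, a 3, …]`:
there are complete quotients' fractional parts `t n ∈ (0,1)` with `t 0 = θ` and
`1 / t n = a (n+1) + t (n+1)` for all `n`. (The value `a 0` is irrelevant.) -/
def HasCF (θ : ℝ) (a : ℕ → ℕ) : Prop :=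
  ∃ t : ℕ → ℝ, t 0 = θ ∧ ∀ n, 0 < t n ∧ t n < 1 ∧ 1 / t n = (a (n + 1) : ℝ) + t (n + 1)

/-- Number of positions `< n` where `u` takes the value `c`. -/
def countBefore (u : ℕ → Bool) (c : Bool) (n : ℕ) : ℕ :=
  ((List.range n).filter fun i => u i = c).length

/-- The colouring of a binary sequence `u` by `y` (on the `a = false` positions)
and `y'` (on the `b = true` positions). -/
def colour (u : ℕ → Bool) (y : ℕ → α) (y' : ℕ → β) : ℕ → α ⊕ β := fun n =>
  if u n = false then Sum.inl (y (countBefore u false n))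
  else Sum.inr (y' (countBefore u true n))

/-- A constant gap sequence: periodic, and consecutive occurrences of each occurring
letter are at a constant distance. -/
def ConstantGap (y : ℕ → α) : Prop :=
  (∃ p, 0 < p ∧ ∀ n, y (n + p) = y n) ∧
  ∀ c : α, (∃ i, y i = c) → ∃ g, 0 < g ∧ ∀ i j, ConsecOcc y c i j → j - i = g

/-- The discolouration (projection) map: letters of the first alphabet go to `a = false`,
letters of the second alphabet go to `b = true`. -/
def proj : α ⊕ β → Bool := Sum.elim (fun _ => false) (fun _ => true)

/-- `v` is a return word to `w` in the sequence `z`. -/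
def IsReturnWord (z : ℕ → α) (w v : List α) : Prop :=
  ∃ i j : ℕ, i < j ∧ OccursAt z w i ∧ OccursAt z w j ∧
    (∀ k, i < k → k < j → ¬ OccursAt z w k) ∧ v = factorAt z i (j - i)

def RightSpecial (z : ℕ → α) (w : List α) : Prop :=
  ∃ a b : α, a ≠ b ∧ IsFactor z (w ++ [a]) ∧ IsFactor z (w ++ [b])

def LeftSpecial (z : ℕ → α) (w : List α) : Prop :=
  ∃ a b : α, a ≠ b ∧ IsFactor z (a :: w) ∧ IsFactor z (b :: w)

def Bispecial (z : ℕ → α) (w : List α) : Prop := LeftSpecial z w ∧ RightSpecial z w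

/-- `o` enumerates, in increasing order, all occurrences of `w` in `z`. -/
def IsOccEnum (z : ℕ → α) (w : List α) (o : ℕ → ℕ) : Prop :=
  StrictMono o ∧ (∀ n, OccursAt z w (o n)) ∧ ∀ i, OccursAt z w i → ∃ n, o n = i

/-- The derived sequence of `z` with respect to the occurrence enumeration `o` of a factor:
its `n`-th letter is the return word between the `n`-th and `(n+1)`-st occurrences. -/
def derivedSeq (z : ℕ → α) (o : ℕ → ℕ) : ℕ → List α :=
  fun n => factorAt z (o n) (o (n + 1) - o n)

/-- The slope of a sequence over a two-letter alphabet: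
the ratio of the smaller letter frequency to the larger one. -/
def HasSlope2 {γ : Type*} [DecidableEq γ] (z : ℕ → γ) (θ : ℝ) : Prop :=
  ∃ (c c' : γ) (ρ ρ' : ℝ), c ≠ c' ∧ (∀ n, z n = c ∨ z n = c') ∧
    HasFreq z c ρ ∧ HasFreq z c' ρ' ∧ ρ < ρ' ∧ θ = ρ / ρ'

/-- The purely cyclic constant gap sequence `(0 1 ⋯ (δ-1))^ω` over `ZMod δ`. -/
def cyc (δ : ℕ) : ℕ → ZMod δ := fun n => (n : ZMod δ)

/-- The colouring `colour(u, (1 2 ⋯ δ)^ω, (1' 2' ⋯ δ')^ω)` over `2δ` letters. -/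
def colourCyc (δ : ℕ) (u : ℕ → Bool) : ℕ → ZMod δ ⊕ ZMod δ := colour u (cyc δ) (cyc δ)

/-!
The letter `a` has some frequency `ρ` in `u`. A Sturmian sequence is balanced, so the drift
`#a(u₀ ⋯ uₙ₋₁) - n ρ` oscillates by at most `1`. If a word containing letters of both colours
occurs in the colouring at the positions `i < j`, then the numbers of `a`s and of `b`s in between
are both multiples of `6`, say `6 A` and `6 (p - A)`, and the drift at `j` differs from the drift at
`i` by `6 |p ρ - A|`. As the drift does the same along both occurrences, it oscillates by at most
`1 - 6 |p ρ - A|` along the first one. On the other hand the drift lifts an orbit of the rotation by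
`-ρ`, so along a factor of length `n` it oscillates by at least `1` minus the longest gap left on
the circle by `n + 1` orbit points. Hence `6 |p ρ - A|` is at most this gap, which the three-gap
theorem expresses through the convergents of `ρ`, and best approximation makes `p` large: the
expansion `ρ = [0, 2, 3, 2, 2, …]` yields `5 n < 3 p`, that is `10 n < 6 p = j - i`.
-/

/-! ### Words and occurrences -/

@[simp]
lemma length_factorAt (v : ℕ → α) (i n : ℕ) : (factorAt v i n).length = n := by
  simp [factorAt]

lemma factorAt_add (v : ℕ → α) (i m n : ℕ) :
    factorAt v i (m + n) = factorAt v i m ++ factorAt v (i + m) n := by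
  simp [factorAt, List.range_add, Nat.add_assoc]

@[simp]
lemma factorAt_one (v : ℕ → α) (i : ℕ) : factorAt v i 1 = [v i] := by
  simp [factorAt]

lemma factorAt_succ (v : ℕ → α) (i n : ℕ) :
    factorAt v i (n + 1) = factorAt v i n ++ [v (i + n)] := by
  rw [factorAt_add, factorAt_one]

lemma factorAt_succ' (v : ℕ → α) (i n : ℕ) :
    factorAt v i (n + 1) = v i :: factorAt v (i + 1) n := by
  rw [Nat.add_comm n, factorAt_add, factorAt_one, List.singleton_append]

lemma factorAt_add_two (v : ℕ → α) (i n : ℕ) :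
    factorAt v i (n + 2) = v i :: (factorAt v (i + 1) n ++ [v (i + 1 + n)]) := by
  rw [factorAt_succ', factorAt_succ]

lemma factorAt_eq_factorAt_iff {v : ℕ → α} {i j n : ℕ} :
    factorAt v i n = factorAt v j n ↔ ∀ k < n, v (i + k) = v (j + k) := by
  simp [factorAt, List.map_inj_left]

lemma factorAt_eq_of_le {v : ℕ → α} {i j m n : ℕ} (h : factorAt v i n = factorAt v j n)
    (hmn : m ≤ n) : factorAt v i m = factorAt v j m :=
  factorAt_eq_factorAt_iff.2 fun k hk ↦ factorAt_eq_factorAt_iff.1 h k (hk.trans_le hmn)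

lemma take_factorAt (v : ℕ → α) (i : ℕ) {m n : ℕ} (h : m ≤ n) :
    (factorAt v i n).take m = factorAt v i m := by
  obtain ⟨k, rfl⟩ := Nat.exists_eq_add_of_le h
  rw [factorAt_add, List.take_left' (length_factorAt v i m)]

lemma drop_factorAt (v : ℕ → α) (i m n : ℕ) :
    (factorAt v i (m + n)).drop m = factorAt v (i + m) n := by
  rw [factorAt_add, List.drop_left' (length_factorAt v i m)]

lemma map_factorAt (f : α → β) (v : ℕ → α) (i n : ℕ) :
    (factorAt v i n).map f = factorAt (f ∘ v) i n := by
  simp [factorAt]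

lemma isFactor_factorAt (v : ℕ → α) (i n : ℕ) : IsFactor v (factorAt v i n) :=
  ⟨i, by rw [length_factorAt]⟩

lemma IsFactor.of_infix {v : ℕ → α} {w x : List α} (hx : IsFactor v x) (h : w <:+: x) :
    IsFactor v w := by
  obtain ⟨i, hi⟩ := hx
  obtain ⟨s, t, rfl⟩ := h
  rw [List.length_append, List.length_append, factorAt_add, factorAt_add] at hi
  have hsw := (List.append_inj hi (by simp)).1
  exact ⟨i + s.length, (List.append_inj hsw (by simp)).2⟩

lemma IsFactor.exists_append_singleton {v : ℕ → α} {w : List α} (hw : IsFactor v w) :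
    ∃ a, IsFactor v (w ++ [a]) := by
  obtain ⟨i, hi⟩ := hw
  refine ⟨v (i + w.length), ?_⟩
  nth_rw 1 [← hi]
  exact factorAt_succ v i w.length ▸ isFactor_factorAt v i (w.length + 1)

lemma OccursAt.getElem_eq {v : ℕ → α} {w : List α} {i k : ℕ} (h : OccursAt v w i)
    (hk : k < w.length) : w[k] = v (i + k) := by
  have : (factorAt v i w.length)[k]? = w[k]? := by rw [show factorAt v i w.length = w from h]
  simpa [factorAt, hk] using this.symm

lemma RightSpecial.of_cons {v : ℕ → α} {a : α} {w : List α} (h : RightSpecial v (a :: w)) :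
    RightSpecial v w := by
  obtain ⟨b, c, hbc, hb, hc⟩ := h
  exact ⟨b, c, hbc, hb.of_infix (List.suffix_cons _ _).isInfix,
    hc.of_infix (List.suffix_cons _ _).isInfix⟩

lemma eq_of_not_rightSpecial {v : ℕ → α} {i j n : ℕ} (h : ¬ RightSpecial v (factorAt v i n))
    (hij : factorAt v i n = factorAt v j n) : v (i + n) = v (j + n) := by
  by_contra hne
  refine h ⟨_, _, hne, ?_, ?_⟩
  · exact factorAt_succ v i n ▸ isFactor_factorAt v i (n + 1)
  · exact hij ▸ factorAt_succ v j n ▸ isFactor_factorAt v j (n + 1)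

lemma factorAt_succ_eq_of_not_rightSpecial {v : ℕ → α} {i j n : ℕ}
    (h : ¬ RightSpecial v (factorAt v i n)) (hij : factorAt v i n = factorAt v j n) :
    factorAt v (i + 1) n = factorAt v (j + 1) n := by
  have hsucc : factorAt v i (n + 1) = factorAt v j (n + 1) := by
    rw [factorAt_succ, factorAt_succ, hij, eq_of_not_rightSpecial h hij]
  rw [factorAt_succ', factorAt_succ'] at hsucc
  exact (List.cons.inj hsucc).2

lemma eventuallyPeriodic_of_not_rightSpecial {v : ℕ → α} {n s t : ℕ} (hst : s < t)
    (heq : factorAt v s n = factorAt v t n)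
    (h : ∀ k, s ≤ k → k < t → ¬ RightSpecial v (factorAt v k n)) : EventuallyPeriodic v := by
  have key : ∀ r, factorAt v (s + r) n = factorAt v (t + r) n ∧
      ¬ RightSpecial v (factorAt v (s + r) n) := by
    intro r
    induction r using Nat.strong_induction_on with
    | _ r ih =>
      constructor
      · cases r with
        | zero => exact heq
        | succ r => exact factorAt_succ_eq_of_not_rightSpecial (ih r r.lt_succ_self).2
                      (ih r r.lt_succ_self).1
      · rcases lt_or_ge (s + r) t with hr | hr
        · exact h _ (Nat.le_add_right s r) hr
        · obtain ⟨hcopy, hns⟩ := ih (r - (t - s)) (by omega)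
          rwa [hcopy, show t + (r - (t - s)) = s + r by omega] at hns
  refine ⟨t - s, Nat.sub_pos_of_lt hst, s + n, fun k hk ↦ ?_⟩
  obtain ⟨r, rfl⟩ := Nat.exists_eq_add_of_le hk
  have := eq_of_not_rightSpecial (key r).2 (key r).1
  rw [show s + n + r + (t - s) = t + r + n by omega, show s + n + r = s + r + n by omega, this]

/-! ### Sturmian sequences are balanced -/

/-- Each word has one or two right extensions over a binary alphabet, so counting the extensions
letter by letter counts the right special words twice. -/
lemma complexity_succ (u : ℕ → Bool) (n : ℕ) :
    complexity u (n + 1) =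
      complexity u n + {w | RightSpecial u w ∧ w.length = n}.ncard := by
  let E (c : Bool) : Set (List Bool) := {w | IsFactor u (w ++ [c]) ∧ w.length = n}
  have hfin (c : Bool) : (E c).Finite := (List.finite_length_eq Bool n).subset fun w hw ↦ hw.2
  have hsucc : {w | IsFactor u w ∧ w.length = n + 1} =
      (· ++ [false]) '' E false ∪ (· ++ [true]) '' E true := by
    ext w
    constructor
    · rintro ⟨hw, hlen⟩
      obtain rfl | ⟨x, c, rfl⟩ := List.eq_nil_or_concat' w
      · simp at hlen
      · have hx : x.length = n := by simpa using hlen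
        cases c
        · exact .inl ⟨x, ⟨hw, hx⟩, rfl⟩
        · exact .inr ⟨x, ⟨hw, hx⟩, rfl⟩
    · rintro (⟨x, ⟨hx, rfl⟩, rfl⟩ | ⟨x, ⟨hx, rfl⟩, rfl⟩) <;> exact ⟨hx, by simp⟩
  have hunion : E false ∪ E true = {w | IsFactor u w ∧ w.length = n} := by
    ext w
    constructor
    · rintro (⟨hw, hlen⟩ | ⟨hw, hlen⟩) <;>
        exact ⟨hw.of_infix (List.prefix_append _ _).isInfix, hlen⟩
    · rintro ⟨hw, hlen⟩
      obtain ⟨_ | _, hwc⟩ := hw.exists_append_singleton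
      · exact .inl ⟨hwc, hlen⟩
      · exact .inr ⟨hwc, hlen⟩
  have hinter : E false ∩ E true = {w | RightSpecial u w ∧ w.length = n} := by
    ext w
    simp only [E, RightSpecial, Set.mem_inter_iff, Set.mem_ofPred_eq, Bool.exists_bool]
    tauto
  have hdisj : Disjoint ((· ++ [false]) '' E false) ((· ++ [true]) '' E true) := by
    rw [Set.disjoint_left]
    rintro _ ⟨x, -, rfl⟩ ⟨y, -, hxy⟩
    simp at hxy
  rw [complexity, complexity, hsucc, ← hunion, ← hinter,
    Set.ncard_union_add_ncard_inter _ _ (hfin _) (hfin _),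
    Set.ncard_union_eq hdisj ((hfin _).image _) ((hfin _).image _),
    Set.ncard_image_of_injective _ (List.append_left_injective [false]),
    Set.ncard_image_of_injective _ (List.append_left_injective [true])]

lemma Sturmian.existsUnique_rightSpecial {u : ℕ → Bool} (hu : Sturmian u) (n : ℕ) :
    ∃! w, RightSpecial u w ∧ w.length = n := by
  have hcard : {w | RightSpecial u w ∧ w.length = n}.ncard = 1 := by
    have := complexity_succ u n
    rw [hu.2, hu.2] at this
    omega
  obtain ⟨w, hw⟩ := Set.ncard_eq_one.1 hcard
  exact ⟨w, Set.eq_singleton_iff_unique_mem.1 hw⟩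

lemma Sturmian.exists_rightSpecial_factorAt {u : ℕ → Bool} (hu : Sturmian u) (n i : ℕ) :
    ∃ k ≤ n, RightSpecial u (factorAt u (i + k) n) := by
  by_contra! hns
  let F : Set (List Bool) := {w | IsFactor u w ∧ w.length = n}
  have hF : F.ncard = n + 1 := hu.2 n
  obtain ⟨r, ⟨hr, hrlen⟩, -⟩ := hu.existsUnique_rightSpecial n
  have hrF : r ∈ F := by
    obtain ⟨a, -, -, ha, -⟩ := hr
    exact ⟨ha.of_infix (List.prefix_append _ _).isInfix, hrlen⟩
  have hcard : (F \ {r}).ncard < (Set.Iic n).ncard := by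
    rw [Set.ncard_sdiff_singleton_of_mem hrF, hF, Set.ncard_eq_toFinset_card']
    simp
  obtain ⟨s, hs, t, ht, hst, heq⟩ := Set.exists_ne_map_eq_of_ncard_lt_of_maps_to hcard
    (f := fun k ↦ factorAt u (i + k) n)
    (fun k hk ↦ ⟨⟨isFactor_factorAt u _ n, length_factorAt u _ n⟩,
      fun (h : factorAt u (i + k) n = r) ↦ hns k hk (h ▸ hr)⟩)
    ((List.finite_length_eq Bool n).subset fun w hw ↦ hw.1.2)
  wlog hlt : s < t generalizing s t
  · exact this t ht s hs hst.symm heq.symm (by omega)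
  refine hu.1 (eventuallyPeriodic_of_not_rightSpecial (Nat.add_lt_add_left hlt i) heq ?_)
  intro k hsk hkt
  obtain ⟨m, rfl⟩ := Nat.exists_eq_add_of_le ((Nat.le_add_right i s).trans hsk)
  exact hns m (by have : t ≤ n := ht; omega)

lemma Sturmian.not_forall_isFactor_palindrome {u : ℕ → Bool} (hu : Sturmian u) {w : List Bool}
    (hw : w.reverse = w) : ¬ ∀ c, IsFactor u (c :: (w ++ [c])) := by
  intro h
  have hRS : RightSpecial u w := ⟨false, true, by simp,
    (h false).of_infix (List.suffix_cons _ _).isInfix,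
    (h true).of_infix (List.suffix_cons _ _).isInfix⟩
  obtain ⟨r, ⟨hr, hrlen⟩, hruniq⟩ := hu.existsUnique_rightSpecial (w.length + 1)
  obtain ⟨d, x, rfl⟩ := List.exists_cons_of_length_eq_add_one hrlen
  obtain rfl : x = w := (hu.existsUnique_rightSpecial w.length).unique
    ⟨hr.of_cons, by simpa using hrlen⟩ ⟨hRS, rfl⟩
  -- The right special word `d x` has to show up in every occurrence of `c x c` with `c = !d`,
  -- where it overlaps the palindrome `x` and clashes with the last letter `c`.
  obtain ⟨i, hi⟩ := h (!d)
  obtain ⟨hi₀, hx, hi₁⟩ : u i = !d ∧ factorAt u (i + 1) x.length = x ∧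
      u (i + 1 + x.length) = !d := by
    simpa [factorAt_add_two] using hi
  obtain ⟨k, hk, hkRS⟩ := hu.exists_rightSpecial_factorAt (x.length + 1) i
  obtain ⟨hk₀, hkx⟩ : u (i + k) = d ∧ factorAt u (i + k + 1) x.length = x := by
    simpa [factorAt_succ'] using hruniq _ ⟨hkRS, length_factorAt u _ _⟩
  have hk_pos : k ≠ 0 := by rintro rfl; simp [hi₀] at hk₀
  have hk_lt : k ≠ x.length + 1 := by
    rintro rfl
    rw [show i + (x.length + 1) = i + 1 + x.length by ring, hi₁] at hk₀
    simp at hk₀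
  have hend : x[x.length - k] = !d := by
    rw [OccursAt.getElem_eq hkx, show i + k + 1 + (x.length - k) = i + 1 + x.length by omega, hi₁]
  have hmid : x[k - 1] = d := by
    rw [OccursAt.getElem_eq hx, show i + 1 + (k - 1) = i + k by omega, hk₀]
  have hpal : x.reverse[k - 1]'(by simp; omega) = x[x.length - k] := by
    rw [List.getElem_reverse]
    congr 1
    omega
  simp [hw, hmid, hend] at hpal
/-- The number of occurrences of the letter `c` in the factor of `v` of length `n` at position
`i`. -/
def factorCount [DecidableEq α] (v : ℕ → α) (c : α) (i n : ℕ) : ℕ := (factorAt v i n).count c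

@[simp]
lemma factorCount_zero [DecidableEq α] (v : ℕ → α) (c : α) (i : ℕ) : factorCount v c i 0 = 0 := by
  simp [factorCount, factorAt]

lemma factorCount_add [DecidableEq α] (v : ℕ → α) (c : α) (i m n : ℕ) :
    factorCount v c i (m + n) = factorCount v c i m + factorCount v c (i + m) n := by
  simp only [factorCount, factorAt_add, List.count_append]

lemma factorCount_one [DecidableEq α] (v : ℕ → α) (c : α) (i : ℕ) :
    factorCount v c i 1 = if v i = c then 1 else 0 := by
  simp [factorCount, List.count_singleton]

lemma balanced_iff [DecidableEq α] {v : ℕ → α} :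
    Balanced v ↔ ∀ c n i j, factorCount v c i n ≤ factorCount v c j n + 1 := by
  constructor
  · intro h c n i j
    have := h c _ _ (isFactor_factorAt v i n) (isFactor_factorAt v j n) (by simp)
    rw [abs_le] at this
    unfold factorCount
    omega
  · rintro h c x y ⟨i, hi⟩ ⟨j, hj⟩ hlen
    have hij := h c x.length i j
    have hji := h c x.length j i
    simp only [factorCount] at hij hji
    rw [hi, hlen, hj] at hij hji
    rw [abs_le]
    omega

lemma eq_of_count_take_eq {x y : List Bool} (hlen : x.length = y.length) (c : Bool)
    (h : ∀ k ≤ x.length, (x.take k).count c = (y.take k).count c) : x = y := by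
  refine List.ext_getElem hlen fun k hx hy ↦ ?_
  have hk := h (k + 1) hx
  rw [List.take_add_one, List.take_add_one, List.count_append, List.count_append, h k hx.le,
    List.getElem?_eq_getElem hx, List.getElem?_eq_getElem hy] at hk
  simp only [Option.toList_some, List.count_singleton, Nat.add_left_cancel_iff] at hk
  cases c <;> cases hxk : x[k] <;> cases hyk : y[k] <;> simp_all

lemma factorAt_eq_of_factorCount_eq {u : ℕ → Bool} {c : Bool} {i j n : ℕ}
    (h : ∀ k ≤ n, factorCount u c i k = factorCount u c j k) :
    factorAt u i n = factorAt u j n := by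
  refine eq_of_count_take_eq (by simp) c fun k hk ↦ ?_
  rw [length_factorAt] at hk
  rw [take_factorAt u i hk, take_factorAt u j hk]
  exact h k hk

lemma reverse_factorAt_eq_of_factorCount_eq {u : ℕ → Bool} {c : Bool} {i n : ℕ}
    (h : ∀ k l, l + k = n → factorCount u c i k = factorCount u c (i + l) k) :
    (factorAt u i n).reverse = factorAt u i n := by
  refine eq_of_count_take_eq (by simp) c fun k hk ↦ ?_
  rw [List.length_reverse, length_factorAt] at hk
  obtain ⟨l, rfl⟩ := Nat.exists_eq_add_of_le' hk
  rw [List.take_reverse, List.count_reverse, length_factorAt, Nat.add_sub_cancel, drop_factorAt,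
    take_factorAt u i hk]
  exact (h k l rfl).symm

lemma exists_of_minimal_imbalance [DecidableEq α] {v : ℕ → α} {c : α} {n i j : ℕ}
    (hmin : ∀ m < n, ∀ i j, factorCount v c i m ≤ factorCount v c j m + 1)
    (hn : factorCount v c j n + 1 < factorCount v c i n) :
    ∃ m, n = m + 2 ∧ (v i = c ∧ v j ≠ c) ∧ (v (i + 1 + m) = c ∧ v (j + 1 + m) ≠ c) ∧
      ∀ k ≤ m, factorCount v c (i + 1) k = factorCount v c (j + 1) k := by
  have hone (l : ℕ) : factorCount v c l 1 ≤ 1 := by rw [factorCount_one]; split_ifs <;> simp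
  obtain ⟨m, rfl⟩ : ∃ m, n = m + 2 := by
    refine Nat.exists_eq_add_of_le' ?_
    by_contra! hlt
    interval_cases n
    · simp at hn
    · have := hone i
      omega
  have hprefix (k : ℕ) (hk : k ≤ m) :
      factorCount v c i (1 + k) = factorCount v c j (1 + k) + 1 := by
    obtain ⟨l, rfl⟩ := Nat.exists_eq_add_of_le hk
    rw [show k + l + 2 = 1 + k + (l + 1) by ring, factorCount_add v c i (1 + k),
      factorCount_add v c j (1 + k)] at hn
    have := hmin (1 + k) (by omega) i j
    have := hmin (l + 1) (by omega) (i + (1 + k)) (j + (1 + k))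
    omega
  have hfirst : v i = c ∧ v j ≠ c := by
    have := hprefix 0 m.zero_le
    simp only [Nat.add_zero, factorCount_one] at this
    split_ifs at this with hi hj
    all_goals first | omega | exact ⟨hi, hj⟩
  have hlast : v (i + 1 + m) = c ∧ v (j + 1 + m) ≠ c := by
    have := hprefix m le_rfl
    rw [show m + 2 = 1 + m + 1 by ring, factorCount_add v c i, factorCount_add v c j,
      factorCount_one, factorCount_one, ← Nat.add_assoc, ← Nat.add_assoc] at hn
    split_ifs at hn with hj hi hi
    all_goals first | omega | exact ⟨hi, hj⟩
  refine ⟨m, rfl, hfirst, hlast, fun k hk ↦ ?_⟩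
  have := hprefix k hk
  rw [factorCount_add, factorCount_add, factorCount_one, factorCount_one, if_pos hfirst.1,
    if_neg hfirst.2] at this
  omega

lemma exists_palindrome_of_minimal_imbalance {u : ℕ → Bool} {c : Bool} {n i j : ℕ}
    (hmin : ∀ m < n, ∀ i j, factorCount u c i m ≤ factorCount u c j m + 1)
    (hn : factorCount u c j n + 1 < factorCount u c i n) :
    ∃ w : List Bool, w.reverse = w ∧ ∀ d, IsFactor u (d :: (w ++ [d])) := by
  obtain ⟨m, rfl, ⟨hi, hj⟩, ⟨hi', hj'⟩, hmid⟩ := exists_of_minimal_imbalance hmin hn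
  have hword : factorAt u (i + 1) m = factorAt u (j + 1) m := factorAt_eq_of_factorCount_eq hmid
  refine ⟨factorAt u (i + 1) m, reverse_factorAt_eq_of_factorCount_eq (c := c) fun k l hkl ↦ ?_,
    fun d ↦ ?_⟩
  · have hsuffix : factorCount u c (i + 1 + l) k = factorCount u c (j + 1 + l) k := by
      have hadd := hmid (l + k) hkl.le
      rwa [factorCount_add, factorCount_add, hmid l (by omega), Nat.add_left_cancel_iff] at hadd
    have hle := hmin (1 + k) (by omega) i (j + 1 + l)
    have hge := hmin (k + 1) (by omega) (i + 1 + l) j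
    rw [factorCount_add u c i, factorCount_one, if_pos hi, Nat.add_comm 1 k, factorCount_add,
      factorCount_one, Nat.add_assoc (j + 1), hkl, if_neg hj'] at hle
    rw [factorCount_add, factorCount_one, Nat.add_assoc (i + 1), hkl, if_pos hi',
      Nat.add_comm k 1, factorCount_add u c j, factorCount_one, if_neg hj,
      ← hmid k (by omega)] at hge
    omega
  · rcases eq_or_ne d c with rfl | hd
    · have := isFactor_factorAt u i (m + 2)
      rwa [factorAt_add_two, hi, hi'] at this
    · have := isFactor_factorAt u j (m + 2)
      rwa [factorAt_add_two, Bool.eq_not.2 hj, Bool.eq_not.2 hj', ← Bool.eq_not.2 hd, ← hword]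
        at this

theorem Sturmian.balanced {u : ℕ → Bool} (hu : Sturmian u) : Balanced u := by
  refine balanced_iff.2 fun c n ↦ ?_
  induction n using Nat.strong_induction_on with
  | _ n ih =>
    intro i j
    by_contra! hn
    obtain ⟨w, hw, hfactor⟩ := exists_palindrome_of_minimal_imbalance ih hn
    exact hu.not_forall_isFactor_palindrome hw hfactor

/-! ### Discrepancy of balanced sequences -/

lemma Balanced.abs_factorCount_mul_sub_le [DecidableEq α] {v : ℕ → α} (hv : Balanced v) (c : α)
    (i n k : ℕ) : |(factorCount v c 0 (k * n) : ℝ) - k * factorCount v c i n| ≤ k := by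
  induction k with
  | zero => simp
  | succ k ih =>
    have h₁ : (factorCount v c (k * n) n : ℝ) ≤ factorCount v c i n + 1 := by
      exact_mod_cast balanced_iff.1 hv c n (k * n) i
    have h₂ : (factorCount v c i n : ℝ) ≤ factorCount v c (k * n) n + 1 := by
      exact_mod_cast balanced_iff.1 hv c n i (k * n)
    rw [abs_le] at ih ⊢
    rw [Nat.succ_mul, factorCount_add, Nat.zero_add]
    push_cast
    constructor <;> linarith

lemma Balanced.abs_factorCount_sub_le [DecidableEq α] {v : ℕ → α} (hv : Balanced v) {c : α}
    {ρ : ℝ} (hρ : HasFreq v c ρ) (i n : ℕ) : |factorCount v c i n - n * ρ| ≤ 1 := by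
  rcases n.eq_zero_or_pos with rfl | hn
  · simp
  have hmul : Tendsto (fun k : ℕ ↦ k * n) atTop atTop := tendsto_id.atTop_mul_const' hn
  have hlim : Tendsto (fun k : ℕ ↦ |n * ((factorCount v c 0 (k * n) : ℝ) / (k * n : ℕ)) -
      factorCount v c i n|) atTop (nhds |n * ρ - factorCount v c i n|) :=
    (((hρ.comp hmul).const_mul (n : ℝ)).sub_const _).abs
  rw [abs_sub_comm]
  refine le_of_tendsto hlim (eventually_atTop.2 ⟨1, fun k hk ↦ ?_⟩)
  have hk' : (0 : ℝ) < k := by exact_mod_cast hk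
  have hn' : (n : ℝ) ≠ 0 := by positivity
  have h := hv.abs_factorCount_mul_sub_le c i n k
  rw [show n * ((factorCount v c 0 (k * n) : ℝ) / (k * n : ℕ)) - factorCount v c i n =
    (factorCount v c 0 (k * n) - k * factorCount v c i n) / k by push_cast; field_simp,
    abs_div, abs_of_pos hk']
  exact (div_le_one hk').2 h

lemma countBefore_eq_factorCount (u : ℕ → Bool) (c : Bool) (n : ℕ) :
    countBefore u c n = factorCount u c 0 n := by
  rw [countBefore, factorCount, factorAt, List.count_eq_countP, List.countP_map,
    List.countP_eq_length_filter]
  congr 2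
  ext i
  cases hi : u i <;> cases c <;> simp [hi]

lemma countBefore_add (u : ℕ → Bool) (c : Bool) (i n : ℕ) :
    countBefore u c (i + n) = countBefore u c i + factorCount u c i n := by
  rw [countBefore_eq_factorCount, countBefore_eq_factorCount, factorCount_add, Nat.zero_add]

/-- The deviation of the number of letters `c` among the first `n` letters of `u` from the
number `n * ρ` expected when `c` has frequency `ρ`. -/
def drift (u : ℕ → Bool) (c : Bool) (ρ : ℝ) (n : ℕ) : ℝ := countBefore u c n - n * ρ

lemma drift_add (u : ℕ → Bool) (c : Bool) (ρ : ℝ) (i n : ℕ) :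
    drift u c ρ (i + n) = drift u c ρ i + (factorCount u c i n - n * ρ) := by
  rw [drift, drift, countBefore_add]
  push_cast
  ring

lemma Balanced.abs_drift_sub_le {u : ℕ → Bool} (hu : Balanced u) {c : Bool} {ρ : ℝ}
    (hρ : HasFreq u c ρ) (k l : ℕ) : |drift u c ρ k - drift u c ρ l| ≤ 1 := by
  wlog hlk : l ≤ k generalizing k l
  · rw [abs_sub_comm]
    exact this l k (by omega)
  obtain ⟨n, rfl⟩ := Nat.exists_eq_add_of_le hlk
  rw [drift_add, add_sub_cancel_left]
  exact hu.abs_factorCount_sub_le hρ l n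

/-- Along both copies of a repeated factor the drift does the same, up to the shift
`drift j - drift i`; so its oscillation along one copy leaves room for that shift. -/
lemma Balanced.drift_sub_drift_le {u : ℕ → Bool} (hu : Balanced u) {c : Bool} {ρ : ℝ}
    (hρ : HasFreq u c ρ) {i j n : ℕ} (hij : factorAt u i n = factorAt u j n) {k l : ℕ}
    (hk : k ≤ n) (hl : l ≤ n) :
    drift u c ρ (i + k) - drift u c ρ (i + l) ≤ 1 - |drift u c ρ j - drift u c ρ i| := by
  have hcopy {m : ℕ} (hm : m ≤ n) :
      drift u c ρ (j + m) = drift u c ρ (i + m) + (drift u c ρ j - drift u c ρ i) := by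
    rw [drift_add, drift_add, factorCount, factorCount, factorAt_eq_of_le hij hm]
    ring
  have h₁ := hu.abs_drift_sub_le hρ (j + k) (i + l)
  have h₂ := hu.abs_drift_sub_le hρ (i + k) (j + l)
  rw [hcopy hk, abs_le] at h₁
  rw [hcopy hl, abs_le] at h₂
  rw [le_sub_comm, abs_le]
  constructor <;> linarith

/-! ### Oscillation of lifts of a rotation orbit -/

lemma exists_one_sub_le_sub_of_forall_step {s : Finset ℕ} (hs : s.Nonempty) {ψ : ℕ → ℝ} {g : ℝ}
    (hstep : ∀ k ∈ s, ∃ k' ∈ s, ∃ (d : ℝ) (z : ℤ), 0 < d ∧ d ≤ g ∧ ψ k' = ψ k - d + z) :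
    ∃ k ∈ s, ∃ l ∈ s, 1 - g ≤ ψ k - ψ l := by
  obtain ⟨l, hl, hmin⟩ := s.exists_min_image ψ hs
  obtain ⟨k, hk, d, z, hd, hdg, heq⟩ := hstep l hl
  have hz : (0 : ℝ) < z := by linarith [hmin k hk]
  have hz' : (1 : ℝ) ≤ z := by exact_mod_cast Int.cast_pos.1 hz
  exact ⟨k, hk, l, hl, by linarith⟩

/-- `ψ` lifts to `ℝ` an orbit of the rotation `y ↦ y - x` of the circle `ℝ / ℤ`. -/
def IsRotationLift (x : ℝ) (ψ : ℕ → ℝ) : Prop :=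
  ∀ k m : ℕ, ∃ z : ℤ, ψ (k + m) = ψ k - m * x + z

lemma IsRotationLift.neg {x : ℝ} {ψ : ℕ → ℝ} (hψ : IsRotationLift x ψ) :
    IsRotationLift (-x) (-ψ) := fun k m ↦ by
  obtain ⟨z, hz⟩ := hψ k m
  exact ⟨-z, by simp only [Pi.neg_apply, hz]; push_cast; ring⟩

lemma isRotationLift_drift (u : ℕ → Bool) (c : Bool) (ρ : ℝ) (i : ℕ) :
    IsRotationLift ρ fun k ↦ drift u c ρ (i + k) := fun k m ↦
  ⟨factorCount u c (i + k) m, by simp only [← Nat.add_assoc, drift_add]; push_cast; ring⟩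

/-- Among the first `N` points of the orbit one can always turn back by `Q * x - A` (`Q` steps
ahead) or by `A' - Q' * x` (`Q'` steps back), so no gap between them exceeds the larger one. -/
lemma IsRotationLift.exists_one_sub_le_sub {x : ℝ} {ψ : ℕ → ℝ} (hψ : IsRotationLift x ψ)
    {Q Q' N : ℕ} {A A' : ℤ} (hN₀ : 0 < N) (hN : Q + Q' ≤ N) (hpos : 0 < A' - Q' * x)
    (hle : A' - Q' * x ≤ Q * x - A) :
    ∃ k < N, ∃ l < N, 1 - (Q * x - A) ≤ ψ k - ψ l := by
  have hstep : ∀ k ∈ Finset.range N, ∃ k' ∈ Finset.range N, ∃ (d : ℝ) (z : ℤ),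
      0 < d ∧ d ≤ Q * x - A ∧ ψ k' = ψ k - d + z := by
    intro k hk
    rw [Finset.mem_range] at hk
    rcases lt_or_ge (k + Q) N with hkQ | hkQ
    · obtain ⟨z, hz⟩ := hψ k Q
      refine ⟨k + Q, Finset.mem_range.2 hkQ, Q * x - A, z - A, hpos.trans_le hle, le_rfl, ?_⟩
      rw [hz]
      push_cast
      ring
    · obtain ⟨k', rfl⟩ := Nat.exists_eq_add_of_le' (show Q' ≤ k by omega)
      obtain ⟨z, hz⟩ := hψ k' Q'
      refine ⟨k', Finset.mem_range.2 (by omega), A' - Q' * x, A' - z, hpos, hle, ?_⟩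
      rw [hz]
      push_cast
      ring
  simpa only [Finset.mem_range] using
    exists_one_sub_le_sub_of_forall_step (Finset.nonempty_range_iff.2 hN₀.ne') hstep

/-! ### Continued fractions -/

/-- Denominators of the convergents of `[0; a 1, a 2, …]`, with the index shifted so that
`denom a 0 = 0` and `denom a 1 = 1`. -/
def denom (a : ℕ → ℕ) : ℕ → ℕ
  | 0 => 0
  | 1 => 1
  | k + 2 => a (k + 1) * denom a (k + 1) + denom a k

/-- Numerators of the convergents of `[0; a 1, a 2, …]`, indexed as in `denom`. -/
def numer (a : ℕ → ℕ) : ℕ → ℤ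
  | 0 => 1
  | 1 => 0
  | k + 2 => a (k + 1) * numer a (k + 1) + numer a k

/-- The approximation error `|denom a k * x - numer a k|`, with the sign of the expression for
`x = [0; a 1, a 2, …]` made explicit. -/
def approxErr (a : ℕ → ℕ) (x : ℝ) (k : ℕ) : ℝ := (-1) ^ (k + 1) * (denom a k * x - numer a k)

lemma approxErr_eq_add (a : ℕ → ℕ) (x : ℝ) (k : ℕ) :
    approxErr a x k = a (k + 1) * approxErr a x (k + 1) + approxErr a x (k + 2) := by
  simp only [approxErr, denom, numer]
  push_cast
  ring

lemma denom_mul_numer_sub (a : ℕ → ℕ) (k : ℕ) :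
    denom a (k + 1) * numer a k - denom a k * numer a (k + 1) = (-1) ^ k := by
  induction k with
  | zero => simp [denom, numer]
  | succ k ih =>
    rw [pow_succ, ← ih]
    simp only [denom, numer]
    push_cast
    ring

lemma HasCF.approxErr_pos {x : ℝ} {a : ℕ → ℕ} (hx : HasCF x a) (k : ℕ) :
    0 < approxErr a x k := by
  obtain ⟨t, ht₀, ht⟩ := hx
  have hsucc (k : ℕ) : approxErr a x (k + 1) = t k * approxErr a x k := by
    induction k with
    | zero => simp [approxErr, denom, numer, ht₀]
    | succ k ih =>
      have hrec := approxErr_eq_add a x k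
      have hinv : 1 = t k * (a (k + 1) + t (k + 1)) := by
        rw [← (ht k).2.2, mul_one_div_cancel (ht k).1.ne']
      linear_combination -hrec + approxErr a x k * hinv - (a (k + 1) + t (k + 1)) * ih
  induction k with
  | zero => simp [approxErr, denom, numer]
  | succ k ih => rw [hsucc]; exact mul_pos (ht k).1 ih

lemma HasCF.partialQuotient_pos {x : ℝ} {a : ℕ → ℕ} (hx : HasCF x a) (k : ℕ) :
    0 < a (k + 1) := by
  obtain ⟨t, -, ht⟩ := hx
  have hinv : 1 < 1 / t k := (one_lt_div (ht k).1).2 (ht k).2.1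
  have : (0 : ℝ) < a (k + 1) := by linarith [(ht k).2.2, (ht (k + 1)).2.1]
  exact_mod_cast this

lemma HasCF.denom_succ_pos {x : ℝ} {a : ℕ → ℕ} (hx : HasCF x a) (k : ℕ) :
    0 < denom a (k + 1) := by
  induction k with
  | zero => simp [denom]
  | succ k ih => exact Nat.add_pos_left (Nat.mul_pos (hx.partialQuotient_pos k) ih) _

lemma exists_eq_mul_denom_add_mul_denom (a : ℕ → ℕ) (k : ℕ) (p A : ℤ) :
    ∃ X Y : ℤ, p = X * denom a k + Y * denom a (k + 1) ∧
      A = X * numer a k + Y * numer a (k + 1) := by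
  have hdet := denom_mul_numer_sub a k
  have hsign : ((-1) ^ k * (-1) ^ k : ℤ) = 1 := by rw [← mul_pow]; simp
  refine ⟨(-1) ^ k * (A * denom a (k + 1) - p * numer a (k + 1)),
    (-1) ^ k * (p * numer a k - A * denom a k), ?_, ?_⟩
  · linear_combination -p * hsign - (-1) ^ k * p * hdet
  · linear_combination -A * hsign - (-1) ^ k * A * hdet

lemma abs_mul_denom_add_mul_denom_sub (a : ℕ → ℕ) (x : ℝ) (k : ℕ) (X Y : ℝ) :
    |(X * denom a k + Y * denom a (k + 1)) * x - (X * numer a k + Y * numer a (k + 1))| =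
      |X * approxErr a x k - Y * approxErr a x (k + 1)| := by
  rw [← one_mul |_ - _|, ← abs_neg_one_pow (α := ℝ) (k + 1), ← abs_mul]
  simp only [approxErr]
  congr 1
  ring

/-- Best approximation. In the basis of two consecutive convergents `(p, A)` has integral
coordinates, which have opposite signs if `p < denom a (k + 1)`; the errors then add up. -/
lemma HasCF.denom_succ_le {x : ℝ} {a : ℕ → ℕ} (hx : HasCF x a) {k p : ℕ} {A : ℤ} (hp : 0 < p)
    (hA : |p * x - A| < approxErr a x k) : denom a (k + 1) ≤ p := by
  by_contra! hlt
  obtain ⟨X, Y, hpXY, rfl⟩ := exists_eq_mul_denom_add_mul_denom a k p A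
  have hpXY' : (p : ℝ) = X * denom a k + Y * denom a (k + 1) := by exact_mod_cast hpXY
  push_cast at hA
  rw [hpXY', abs_mul_denom_add_mul_denom_sub, abs_lt] at hA
  have herr := hx.approxErr_pos (k + 1)
  rcases le_or_gt Y 0 with hY | hY
  · have hX : 1 ≤ X := by nlinarith
    have : (1 : ℝ) ≤ X := by exact_mod_cast hX
    have : (Y : ℝ) ≤ 0 := by exact_mod_cast hY
    nlinarith
  · have hX : X ≤ -1 := by nlinarith
    have : (X : ℝ) ≤ -1 := by exact_mod_cast hX
    have : (0 : ℝ) < Y := by exact_mod_cast hY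
    nlinarith

/-- One half of the three-gap theorem. -/
lemma HasCF.exists_one_sub_le_sub {x : ℝ} {a : ℕ → ℕ} (hx : HasCF x a) {ψ : ℕ → ℝ}
    (hψ : IsRotationLift x ψ) {k s N : ℕ} (hs : s < a (k + 1))
    (hN : denom a k + (s + 1) * denom a (k + 1) ≤ N) :
    ∃ m < N, ∃ l < N, 1 - (approxErr a x k - s * approxErr a x (k + 1)) ≤ ψ m - ψ l := by
  have hN₀ : 0 < N := by nlinarith [hx.denom_succ_pos k]
  have hN' : (denom a k + s * denom a (k + 1)) + denom a (k + 1) ≤ N := by linarith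
  have hpos := hx.approxErr_pos (k + 1)
  have hle : approxErr a x (k + 1) ≤ approxErr a x k - s * approxErr a x (k + 1) := by
    have hs' : (s : ℝ) + 1 ≤ a (k + 1) := by exact_mod_cast hs
    nlinarith [approxErr_eq_add a x k, hx.approxErr_pos (k + 2)]
  rcases k.even_or_odd with hk | hk
  · have := hψ.neg.exists_one_sub_le_sub (A := -(numer a k + s * numer a (k + 1)))
      (A' := -numer a (k + 1)) hN₀ hN'
    simp only [approxErr, pow_succ, hk.neg_one_pow] at hpos hle ⊢
    push_cast at this
    obtain ⟨m, hm, l, hl, h⟩ := this (by linarith) (by linarith)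
    exact ⟨l, hl, m, hm, by simp only [Pi.neg_apply] at h; linarith⟩
  · have := hψ.exists_one_sub_le_sub (A := numer a k + s * numer a (k + 1))
      (A' := numer a (k + 1)) hN₀ hN'
    simp only [approxErr, pow_succ, hk.neg_one_pow] at hpos hle ⊢
    push_cast at this
    obtain ⟨m, hm, l, hl, h⟩ := this (by linarith) (by linarith)
    exact ⟨m, hm, l, hl, by linarith⟩

lemma HasCF.denom_succ_le_of_sub_le {x : ℝ} {a : ℕ → ℕ} (hx : HasCF x a) {ψ : ℕ → ℝ}
    (hψ : IsRotationLift x ψ) {M : ℝ} (hM : 0 < M) {N p : ℕ} {A : ℤ} (hp : 0 < p)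
    (hosc : ∀ k < N, ∀ l < N, ψ k - ψ l ≤ 1 - M * |p * x - A|) {k s m : ℕ} (hs : s < a (k + 1))
    (hN : denom a k + (s + 1) * denom a (k + 1) ≤ N)
    (hgap : approxErr a x k - s * approxErr a x (k + 1) < M * approxErr a x m) :
    denom a (m + 1) ≤ p := by
  obtain ⟨i, hi, j, hj, hij⟩ := hx.exists_one_sub_le_sub hψ hs hN
  refine hx.denom_succ_le (A := A) hp (lt_of_mul_lt_mul_left ?_ hM.le)
  linarith [hosc i hi j hj]

lemma HasCF.fib_le_denom {x : ℝ} {a : ℕ → ℕ} (hx : HasCF x a) (k : ℕ) :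
    Nat.fib k ≤ denom a k := by
  induction k using Nat.twoStepInduction with
  | zero => simp [denom]
  | one => simp [denom]
  | more k ih ih' =>
    rw [Nat.fib_add_two, denom]
    nlinarith [hx.partialQuotient_pos k]

lemma HasCF.mul_approxErr_succ_lt {x : ℝ} {a : ℕ → ℕ} (hx : HasCF x a) {c k : ℕ}
    (hc : c ≤ a (k + 1)) : c * approxErr a x (k + 1) < approxErr a x k := by
  have hc' : (c : ℝ) ≤ a (k + 1) := by exact_mod_cast hc
  nlinarith [approxErr_eq_add a x k, hx.approxErr_pos (k + 1), hx.approxErr_pos (k + 2)]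

section Oscillation

variable {x : ℝ} {a : ℕ → ℕ} {ψ : ℕ → ℝ} {M : ℝ} {N p : ℕ} {A : ℤ}

lemma HasCF.denom_le_of_denom_le (hx : HasCF x a) (hψ : IsRotationLift x ψ) (hp : 0 < p)
    (hosc : ∀ k < N, ∀ l < N, ψ k - ψ l ≤ 1 - M * |p * x - A|) {k : ℕ}
    (hN : denom a (k + 2) ≤ N) (hM : (a (k + 2) : ℝ) + 2 ≤ M) : denom a (k + 3) ≤ p := by
  obtain ⟨s, hs⟩ : ∃ s, a (k + 1) = s + 1 := Nat.exists_eq_add_of_le' (hx.partialQuotient_pos k)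
  refine hx.denom_succ_le_of_sub_le hψ (by linarith) hp hosc (k := k) (s := s) (by omega) ?_ ?_
  · rw [denom, hs] at hN
    linarith
  · have hgap : approxErr a x k - s * approxErr a x (k + 1) =
        (a (k + 2) + 1) * approxErr a x (k + 2) + approxErr a x (k + 3) := by
      have hk := approxErr_eq_add a x k
      rw [hs] at hk
      push_cast at hk
      linear_combination hk + approxErr_eq_add a x (k + 1)
    have hlt := hx.mul_approxErr_succ_lt (c := 1) (hx.partialQuotient_pos (k + 2))
    push_cast at hlt
    rw [hgap]
    nlinarith [hx.approxErr_pos (k + 2)]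

lemma HasCF.denom_le_of_denom_le_add (hx : HasCF x a) (hψ : IsRotationLift x ψ) (hp : 0 < p)
    (hosc : ∀ k < N, ∀ l < N, ψ k - ψ l ≤ 1 - M * |p * x - A|) {k : ℕ}
    (hN : denom a (k + 2) ≤ N + denom a (k + 1)) (ha : 2 ≤ a (k + 1)) (ha' : 2 ≤ a (k + 3))
    (hM : 2 * (a (k + 2) : ℝ) + 2 ≤ M) : denom a (k + 3) ≤ p := by
  obtain ⟨s, hs⟩ : ∃ s, a (k + 1) = s + 2 := Nat.exists_eq_add_of_le' ha
  refine hx.denom_succ_le_of_sub_le hψ (by linarith) hp hosc (k := k) (s := s) (by omega) ?_ ?_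
  · rw [denom, hs] at hN
    linarith
  · have hgap : approxErr a x k - s * approxErr a x (k + 1) =
        (2 * a (k + 2) + 1) * approxErr a x (k + 2) + 2 * approxErr a x (k + 3) := by
      have hk := approxErr_eq_add a x k
      rw [hs] at hk
      push_cast at hk
      linear_combination hk + 2 * approxErr_eq_add a x (k + 1)
    have hlt := hx.mul_approxErr_succ_lt ha'
    push_cast at hlt
    rw [hgap]
    nlinarith [hx.approxErr_pos (k + 2)]

lemma HasCF.mul_lt_mul_of_lt_denom_three (hx : HasCF x a) (ha₁ : a 1 = 2) (ha₂ : a 2 = 3)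
    (ha : ∀ n, 3 ≤ n → a n = 2) (hψ : IsRotationLift x ψ) (hp : 0 < p)
    (hosc : ∀ k < N + 1, ∀ l < N + 1, ψ k - ψ l ≤ 1 - 6 * |p * x - A|) (hN : 0 < N)
    (hlt : N + 1 < denom a 3) : 5 * N < 3 * p := by
  have hdenom₂ : denom a 2 = 2 := by simp [denom, ha₁]
  have hdenom₃ : denom a 3 = 7 := by simp [denom, ha₁, ha₂]
  rcases lt_or_ge N 5 with hN₅ | hN₅
  · have : denom a 3 ≤ p :=
      hx.denom_le_of_denom_le (k := 0) hψ hp hosc (show denom a 2 ≤ N + 1 by omega)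
        (by norm_num [ha₂])
    omega
  · have hdenom₄ : denom a 4 = 16 := by simp [denom, ha₁, ha₂, ha 3]
    have : denom a 4 ≤ p :=
      hx.denom_le_of_denom_le_add (k := 1) hψ hp hosc
        (show denom a 3 ≤ N + 1 + denom a 2 by omega) (by norm_num [ha₂])
        (by norm_num [ha 4]) (by norm_num [ha 3])
    omega

lemma HasCF.mul_lt_mul_of_denom_le (hx : HasCF x a) (ha₂ : a 2 = 3)
    (ha : ∀ n, 3 ≤ n → a n = 2) (hψ : IsRotationLift x ψ) (hp : 0 < p)
    (hosc : ∀ k < N + 1, ∀ l < N + 1, ψ k - ψ l ≤ 1 - 6 * |p * x - A|) {k : ℕ}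
    (hle : denom a (k + 3) ≤ N + 1) (hlt : N + 1 < denom a (k + 4)) : 5 * N < 3 * p := by
  have ha_le (n : ℕ) : 2 ≤ a (n + 2) := by rcases n with _ | n <;> simp [ha₂, ha]
  have hrec : denom a (k + 4) = 2 * denom a (k + 3) + denom a (k + 2) := by
    rw [denom, ha (k + 3) (by omega)]
  have hdouble : 2 * denom a (k + 2) ≤ denom a (k + 3) := by
    rw [show denom a (k + 3) = a (k + 2) * denom a (k + 2) + denom a (k + 1) from rfl]
    nlinarith [ha_le k]
  rcases lt_or_ge (N + 1 + denom a (k + 3)) (denom a (k + 4)) with hshort | hlong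
  · have : denom a (k + 4) ≤ p :=
      hx.denom_le_of_denom_le (k := k + 1) hψ hp hosc hle (by norm_num [ha])
    omega
  · have : denom a (k + 5) ≤ p :=
      hx.denom_le_of_denom_le_add (k := k + 2) hψ hp hosc hlong (ha_le (k + 1))
        (by simp [ha]) (by norm_num [ha])
    have : denom a (k + 5) = 2 * denom a (k + 4) + denom a (k + 3) := by
      rw [denom, ha (k + 4) (by omega)]
    omega

lemma HasCF.mul_lt_mul_of_oscillation (hx : HasCF x a) (ha₁ : a 1 = 2) (ha₂ : a 2 = 3)
    (ha : ∀ n, 3 ≤ n → a n = 2) (hψ : IsRotationLift x ψ) (hp : 0 < p)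
    (hosc : ∀ k < N + 1, ∀ l < N + 1, ψ k - ψ l ≤ 1 - 6 * |p * x - A|) (hN : 0 < N) :
    5 * N < 3 * p := by
  have key (k : ℕ) (hlt : N + 1 < denom a (k + 3)) : 5 * N < 3 * p := by
    induction k with
    | zero => exact hx.mul_lt_mul_of_lt_denom_three ha₁ ha₂ ha hψ hp hosc hN hlt
    | succ k ih =>
      rcases lt_or_ge (N + 1) (denom a (k + 3)) with hlt' | hle
      · exact ih hlt'
      · exact hx.mul_lt_mul_of_denom_le ha₂ ha hψ hp hosc hle hlt
  refine key N (lt_of_lt_of_le ?_ (hx.fib_le_denom (N + 3)))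
  have := Nat.le_fib_add_one (N + 3)
  omega

end Oscillation

/-! ### The frequencies of a sequence of given slope -/

lemma factorCount_false_add_true (u : ℕ → Bool) (i n : ℕ) :
    factorCount u false i n + factorCount u true i n = n := by
  rw [factorCount, factorCount, List.count_false_add_count_true, length_factorAt]

lemma HasSlope.hasFreq_false {u : ℕ → Bool} {θ : ℝ} (h : HasSlope u θ) :
    HasFreq u false (θ / (1 + θ)) := by
  obtain ⟨ρa, ρb, ha, hb, hlt, rfl⟩ := h
  have hone : ρa + ρb = 1 := by
    refine tendsto_nhds_unique (ha.add hb) (tendsto_const_nhds.congr' ?_)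
    filter_upwards [eventually_gt_atTop 0] with n hn
    rw [← add_div, eq_div_iff (by positivity), one_mul]
    exact_mod_cast (factorCount_false_add_true u 0 n).symm
  have hb₀ : 0 < ρb := by linarith
  rwa [one_add_div hb₀.ne', div_div_div_cancel_right₀ hb₀.ne', add_comm ρb, hone, div_one]

lemma HasCF.div_one_add {θ : ℝ} {a : ℕ → ℕ} (h : HasCF θ a) :
    HasCF (θ / (1 + θ)) (Function.update a 1 (a 1 + 1)) := by
  obtain ⟨t, rfl, ht⟩ := h
  refine ⟨Function.update t 0 (t 0 / (1 + t 0)), by simp, fun n ↦ ?_⟩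
  obtain ⟨hpos, hlt, heq⟩ := ht n
  rcases n with _ | n
  · have hinv : 1 / (t 0 / (1 + t 0)) = a 1 + 1 + t 1 := by
      rw [one_div_div, add_div, heq, div_self hpos.ne']
      ring
    refine ⟨?_, ?_, by simpa using hinv⟩ <;> rw [Function.update_self]
    · positivity
    · rw [div_lt_one (by positivity)]
      linarith
  · simpa [hpos, hlt] using heq

/-! ### Colourings -/

@[simp]
lemma proj_colourCyc (δ : ℕ) (u : ℕ → Bool) (n : ℕ) : proj (colourCyc δ u n) = u n := by
  cases h : u n <;> simp [colourCyc, colour, proj, h]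

lemma countBefore_modEq_of_colourCyc_eq {δ : ℕ} {u : ℕ → Bool} {m n : ℕ}
    (h : colourCyc δ u m = colourCyc δ u n) :
    countBefore u (u m) m ≡ countBefore u (u m) n [MOD δ] := by
  rw [← ZMod.natCast_eq_natCast_iff]
  have hproj : u m = u n := by rw [← proj_colourCyc δ u m, h, proj_colourCyc]
  cases hm : u m <;> rw [hm] at hproj <;>
    simpa [colourCyc, colour, cyc, hm, ← hproj] using h

section Repetition

variable {δ : ℕ} {u : ℕ → Bool} {w : List (ZMod δ ⊕ ZMod δ)} {i d : ℕ}

lemma OccursAt.factorAt_eq_map_proj (hi : OccursAt (colourCyc δ u) w i) :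
    factorAt u i w.length = w.map proj := by
  rw [OccursAt] at hi
  nth_rw 2 [← hi]
  rw [map_factorAt]
  congr 1
  ext n
  simp

lemma dvd_factorCount_of_occursAt (hi : OccursAt (colourCyc δ u) w i)
    (hd : OccursAt (colourCyc δ u) w (i + d)) {c : Bool} (hc : c ∈ w.map proj) :
    δ ∣ factorCount u c i d := by
  obtain ⟨x, hx, rfl⟩ := List.mem_map.1 hc
  obtain ⟨k, hk, rfl⟩ := List.mem_iff_getElem.1 hx
  have hu : factorAt u i w.length = factorAt u (i + d) w.length :=
    hi.factorAt_eq_map_proj.trans hd.factorAt_eq_map_proj.symm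
  have h := countBefore_modEq_of_colourCyc_eq ((hi.getElem_eq hk).symm.trans (hd.getElem_eq hk))
  rw [hi.getElem_eq hk, proj_colourCyc]
  rw [countBefore_add, countBefore_add, countBefore_add, factorCount, factorAt_eq_of_le hu hk.le,
    ← factorCount] at h
  exact Nat.modEq_zero_iff_dvd.1
    (Nat.ModEq.add_left_cancel' _ (Nat.ModEq.add_right_cancel' _ h)).symm

end Repetition

theorem statement16_general {u : ℕ → Bool} (hu : Sturmian u) {θ : ℝ} (hθ : HasSlope u θ)
    {a : ℕ → ℕ} (hcf : HasCF θ a) (ha₁ : a 1 = 1) (ha₂ : a 2 = 3) (ha : ∀ n, 3 ≤ n → a n = 2)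
    {w : List (ZMod 6 ⊕ ZMod 6)} (hπa : false ∈ w.map proj) (hπb : true ∈ w.map proj) {i j : ℕ}
    (hij : i < j) (hi : OccursAt (colourCyc 6 u) w i) (hj : OccursAt (colourCyc 6 u) w j) :
    (w.length : ℝ) / (j - i : ℕ) < 1 / 10 := by
  obtain ⟨d, rfl⟩ := Nat.exists_eq_add_of_le hij.le
  obtain ⟨A, hA⟩ := dvd_factorCount_of_occursAt hi hj hπa
  obtain ⟨B, hB⟩ := dvd_factorCount_of_occursAt hi hj hπb
  have hd : d = 6 * (A + B) := by rw [← factorCount_false_add_true u i d, hA, hB, mul_add]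
  have hw : 0 < w.length := List.length_pos_iff.2 (by rintro rfl; simp at hπa)
  have hdrift : |drift u false (θ / (1 + θ)) (i + d) - drift u false (θ / (1 + θ)) i| =
      6 * |((A + B : ℕ) : ℝ) * (θ / (1 + θ)) - (A : ℤ)| := by
    rw [drift_add, hA, hd, ← abs_of_pos (show (0 : ℝ) < 6 by norm_num), ← abs_mul, ← abs_neg]
    push_cast
    ring_nf
  have hlt : 5 * w.length < 3 * (A + B) := by
    refine hcf.div_one_add.mul_lt_mul_of_oscillation (A := A) (by simp [ha₁]) (by simp [ha₂])
      (fun n hn ↦ by rw [Function.update_of_ne (by omega), ha n hn])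
      (isRotationLift_drift u false _ i) (by omega) (fun k hk l hl ↦ ?_) hw
    rw [← hdrift]
    exact hu.balanced.drift_sub_drift_le hθ.hasFreq_false
      (hi.factorAt_eq_map_proj.trans hj.factorAt_eq_map_proj.symm) (by omega) (by omega)
  rw [Nat.add_sub_cancel_left, div_lt_div_iff₀ (by norm_cast; omega) (by norm_num)]
  norm_cast
  omega

theorem statement16 (u : ℕ → Bool) (hu : IsStandard u)
    (θ : ℝ) (hθ : HasSlope u θ) (a : ℕ → ℕ) (hcf : HasCF θ a)
    (ha1 : a 1 = 1) (ha2 : a 2 = 3) (ha : ∀ n, 3 ≤ n → a n = 2)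
    (w : List (ZMod 6 ⊕ ZMod 6)) (hw : Bispecial (colourCyc 6 u) w)
    (hπa : false ∈ w.map proj) (hπb : true ∈ w.map proj)
    (v : List (ZMod 6 ⊕ ZMod 6)) (hv : IsReturnWord (colourCyc 6 u) w v) :
    (w.length : ℝ) / (v.length : ℝ) < 1 / 10 := by
  obtain ⟨i, j, hij, hi, hj, -, rfl⟩ := hv
  rw [length_factorAt]
  exact statement16_general hu.1 hθ hcf ha1 ha2 ha hπa hπb hij hi hj

end BalancedCE
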